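/- Let R ≥ 1 and for each i = 1,…,R let Ψ_i be a complex L_i × K matrix with no all-zero column. If there exists an index j ∈ {1,…,R} such that rank(Ψ_j) = K, then the R-fold Khatri-Rao product Ψ_1 ⊙ ⋯ ⊙ Ψ_R has full column rank K. -/

import Mathlib

open Matrix
open scoped BigOperators

section

variable {ι n α : Type*} {m : ι → Type*} [Fintype ι]

/-- The Khatri-Rao (column-wise Kronecker) product of a finite family of matrices with a common
column index. A row of the product is indexed by the choice of one row in every factor. -/
def khatriRao [CommMonoid α] (Ψ : ∀ i, Matrix (m i) n α) : Matrix (∀ i, m i) n α :=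
  Matrix.of fun J k => ∏ i, Ψ i (J i) k

theorem khatriRao_update_apply [DecidableEq ι] [CommMonoid α] (Ψ : ∀ i, Matrix (m i) n α)
    (J : ∀ i, m i) (p : ι) (x : m p) (k : n) :
    khatriRao Ψ (Function.update J p x) k =
      (∏ i ∈ Finset.univ.erase p, Ψ i (J i) k) * Ψ p x k := by
  have update_off_p : ∀ i ∈ Finset.univ.erase p,
      Ψ i (Function.update J p x i) k = Ψ i (J i) k := fun i hi => by
    rw [Function.update_of_ne (Finset.ne_of_mem_erase hi)]
  rw [khatriRao, Matrix.of_apply, ← Finset.prod_erase_mul _ _ (Finset.mem_univ p),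
    Function.update_self, Finset.prod_congr rfl update_off_p]

theorem linearIndependent_col_khatriRao [CommRing α] [IsDomain α] (Ψ : ∀ i, Matrix (m i) n α)
    (p : ι) (hz : ∀ i ≠ p, ∀ k, ∃ j, Ψ i j k ≠ 0) (hp : LinearIndependent α (Ψ p).col) :
    LinearIndependent α (khatriRao Ψ).col := by
  -- Restricting a relation among the columns of the product to the rows that agree with a fixed
  -- `J` away from `p` gives a relation among the columns of `Ψ p`, its `k`-th coefficient
  -- multiplied by `∏ i ≠ p, Ψ i (J i) k`. For each `k`, some `J` makes this factor nonzero.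
  classical
  refine linearIndependent_iff'.mpr fun s c hc k hk => ?_
  have exists_row_ne_zero : ∀ i, ∃ j, Ψ i j k ≠ 0 := fun i => by
    obtain rfl | hi := eq_or_ne i p
    · exact Function.ne_iff.mp (hp.ne_zero k)
    · exact hz i hi k
  choose J hJ using exists_row_ne_zero
  have restricted_relation :
      ∑ k' ∈ s, (c k' * ∏ i ∈ Finset.univ.erase p, Ψ i (J i) k') • (Ψ p).col k' = 0 := by
    ext x
    simpa only [Finset.sum_apply, Pi.smul_apply, smul_eq_mul, Matrix.col_apply, Pi.zero_apply,
      khatriRao_update_apply, mul_assoc] using congrFun hc (Function.update J p x)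
  have coeff_eq_zero : c k * ∏ i ∈ Finset.univ.erase p, Ψ i (J i) k = 0 :=
    linearIndependent_iff'.mp hp s _ restricted_relation k hk
  exact (mul_eq_zero.mp coeff_eq_zero).resolve_right (Finset.prod_ne_zero_iff.mpr fun i _ => hJ i)

end

theorem rank_eq_card_iff_linearIndependent_col {m n α : Type*} [Fintype n] [CommRing α]
    [Nontrivial α] (A : Matrix m n α) :
    A.rank = Fintype.card n ↔ LinearIndependent α A.col := by
  rw [linearIndependent_iff_card_eq_finrank_span, Matrix.rank_eq_finrank_span_cols, Set.finrank,
    eq_comm]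

theorem khatriRao_full_column_rank_general {ι n α : Type*} {m : ι → Type*} [Fintype ι]
    [Fintype n] [CommRing α] [IsDomain α] (Ψ : ∀ i, Matrix (m i) n α) (p : ι)
    (hz : ∀ i ≠ p, ∀ k, ∃ j, Ψ i j k ≠ 0) (hrank : (Ψ p).rank = Fintype.card n) :
    (khatriRao Ψ).rank = Fintype.card n := by
  rw [rank_eq_card_iff_linearIndependent_col] at hrank ⊢
  exact linearIndependent_col_khatriRao Ψ p hz hrank

/-- If each factor of an `R`-fold Khatri-Rao product has no all-zero column and
at least one factor has full column rank `K`, then the Khatri-Rao product has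
full column rank `K`. -/
theorem khatriRao_full_column_rank (R : ℕ) (hR : 1 ≤ R) (L : Fin R → ℕ) (K : ℕ)
    (Ψ : ∀ i : Fin R, Matrix (Fin (L i)) (Fin K) ℂ)
    (hz : ∀ (i : Fin R) (k : Fin K), ∃ j : Fin (L i), Ψ i j k ≠ 0)
    (hrank : ∃ j : Fin R, (Ψ j).rank = K) :
    (Matrix.of fun (j : ∀ i, Fin (L i)) (k : Fin K) => ∏ i, Ψ i (j i) k).rank = K := by
  obtain ⟨p, hp⟩ := hrank
  exact (khatriRao_full_column_rank_general Ψ p (fun i _ => hz i)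
    (hp.trans (Fintype.card_fin K).symm)).trans (Fintype.card_fin K)
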